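/- arXiv:2402.07246 — 5 statements merged into one kernel-verified Lean document; each statement's English description precedes it below -/
import Mathlib

section
/- Let S be a nonempty finite type, let P : Matrix S S ℝ be a row-stochastic matrix, and let γ ∈ ℝ with 0 ≤ γ < 1. Then every entry of the matrix (I − γ·P)⁻¹ is nonnegative. Consequently, for any vector x : S → ℝ with x(s) ≥ 0 for all s, the vector (I − γ·P)⁻¹ *ᵥ x has all components nonnegative. -/
open Matrix BigOperators

/-- A matrix is row-stochastic if all entries are nonnegative and every row sums to 1. -/
def RowStochastic {S : Type*} [Fintype S] (P : Matrix S S ℝ) : Prop :=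
  (∀ i j, 0 ≤ P i j) ∧ (∀ i, ∑ j, P i j = 1)

/-- Minimum principle: if `(1 - γ P) v ≥ 0` then `v ≥ 0`. -/
theorem discount_min_principle {S : Type*} [Fintype S] [DecidableEq S] [Nonempty S]
    (P : Matrix S S ℝ) (hP : RowStochastic P) (γ : ℝ) (hγ0 : 0 ≤ γ) (hγ1 : γ < 1)
    (v : S → ℝ) (hv : ∀ s, 0 ≤ ((1 - γ • P) *ᵥ v) s) (s : S) : 0 ≤ v s := by
  obtain ⟨m, hm⟩ := Finite.exists_min v
  have h1 : ((1 - γ • P) *ᵥ v) m = v m - γ * ∑ j, P m j * v j := by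
    rw [Matrix.sub_mulVec, Matrix.smul_mulVec, Matrix.one_mulVec]
    simp [Matrix.mulVec, dotProduct]
  have h2 : v m ≤ ∑ j, P m j * v j := by
    calc v m = ∑ j, P m j * v m := by rw [← Finset.sum_mul, hP.2 m, one_mul]
      _ ≤ ∑ j, P m j * v j :=
        Finset.sum_le_sum fun j _ => mul_le_mul_of_nonneg_left (hm j) (hP.1 m j)
  have h3 := hv m
  rw [h1] at h3
  have h4 := mul_le_mul_of_nonneg_left h2 hγ0
  have h5 : 0 ≤ v m := by
    by_contra h
    push Not at h
    nlinarith
  exact h5.trans (hm s)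

theorem inv_one_sub_discount_smul_nonneg {S : Type*} [Fintype S] [DecidableEq S] [Nonempty S]
    (P : Matrix S S ℝ) (hP : RowStochastic P) (γ : ℝ) (hγ0 : 0 ≤ γ) (hγ1 : γ < 1) :
    (∀ i j : S, 0 ≤ (1 - γ • P)⁻¹ i j) ∧
    (∀ x : S → ℝ, (∀ s, 0 ≤ x s) → ∀ s, 0 ≤ ((1 - γ • P)⁻¹ *ᵥ x) s) := by
  have hdet : IsUnit (1 - γ • P).det := by
    rw [isUnit_iff_ne_zero]
    intro h0
    obtain ⟨v, hv0, hv⟩ := Matrix.exists_mulVec_eq_zero_iff.mpr h0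
    apply hv0
    funext s
    have h1 := discount_min_principle P hP γ hγ0 hγ1 v (by simp [hv]) s
    have h2 := discount_min_principle P hP γ hγ0 hγ1 (-v) (by simp [Matrix.mulVec_neg, hv]) s
    simp only [Pi.neg_apply] at h2
    simp only [Pi.zero_apply]
    linarith
  have key : ∀ x : S → ℝ, (∀ s, 0 ≤ x s) → ∀ s, 0 ≤ ((1 - γ • P)⁻¹ *ᵥ x) s := by
    intro x hx
    apply discount_min_principle P hP γ hγ0 hγ1
    rw [Matrix.mulVec_mulVec, Matrix.mul_nonsing_inv _ hdet, Matrix.one_mulVec]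
    exact hx
  refine ⟨fun i j => ?_, key⟩
  have h := key (Pi.single j 1) (fun s => by
    by_cases hs : s = j
    · subst hs; simp
    · simp [hs]) i
  simpa using h
end

section
/- Policy improvement comparison: let S be a nonempty finite type, let Q, Q' : Matrix S S ℝ be row-stochastic matrices, let γ ∈ ℝ with 0 ≤ γ < 1, and let R : S → ℝ. Set V = (I − γ·Q)⁻¹ *ᵥ R and V' = (I − γ·Q')⁻¹ *ᵥ R. If R + γ·(Q' *ᵥ V) ≥ V componentwise (equivalently, γ·(Q' *ᵥ V)(s) ≥ γ·(Q *ᵥ V)(s) for every s), then V'(s) ≥ V(s) for every s ∈ S. -/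
open Matrix BigOperators

theorem sub_fixed_nonpos {S : Type*} [Fintype S] [Nonempty S]
    (P : Matrix S S ℝ) (hP : RowStochastic P) (γ : ℝ) (hγ0 : 0 ≤ γ) (hγ1 : γ < 1)
    (x : S → ℝ) (h : ∀ s, x s ≤ γ * (P *ᵥ x) s) : ∀ s, x s ≤ 0 := by
  obtain ⟨m, hm⟩ := Finite.exists_max x
  have h1 : (P *ᵥ x) m ≤ x m := by
    calc (P *ᵥ x) m = ∑ j, P m j * x j := rfl
      _ ≤ ∑ j, P m j * x m :=
        Finset.sum_le_sum fun j _ => mul_le_mul_of_nonneg_left (hm j) (hP.1 m j)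
      _ = x m := by rw [← Finset.sum_mul, hP.2 m, one_mul]
  have h2 := h m
  have h3 := mul_le_mul_of_nonneg_left h1 hγ0
  have h4 : x m ≤ 0 := by nlinarith
  exact fun s => (hm s).trans h4

theorem isUnit_one_sub {S : Type*} [Fintype S] [DecidableEq S] [Nonempty S]
    (P : Matrix S S ℝ) (hP : RowStochastic P) (γ : ℝ) (hγ0 : 0 ≤ γ) (hγ1 : γ < 1) :
    IsUnit (1 - γ • P).det := by
  rw [isUnit_iff_ne_zero]
  intro h0
  obtain ⟨x, hx0, hx⟩ := Matrix.exists_mulVec_eq_zero_iff.mpr h0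
  have hx' : ∀ s, x s = γ * (P *ᵥ x) s := fun s => by
    have := congrFun hx s
    simp only [Matrix.sub_mulVec, Matrix.one_mulVec, Matrix.smul_mulVec, Pi.sub_apply,
      Pi.smul_apply, smul_eq_mul, Pi.zero_apply] at this
    linarith
  apply hx0
  funext s
  have h1 := sub_fixed_nonpos P hP γ hγ0 hγ1 x (fun s => (hx' s).le) s
  have h2 := sub_fixed_nonpos P hP γ hγ0 hγ1 (-x) (fun s => by
    rw [Matrix.mulVec_neg]
    simp only [Pi.neg_apply]
    linarith [hx' s]) s
  simp only [Pi.neg_apply] at h2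
  simp only [Pi.zero_apply]
  linarith

/-- Policy improvement comparison. -/
theorem policy_improvement {S : Type*} [Fintype S] [DecidableEq S] [Nonempty S]
    (Q Q' : Matrix S S ℝ) (hQ : RowStochastic Q) (hQ' : RowStochastic Q')
    (γ : ℝ) (hγ0 : 0 ≤ γ) (hγ1 : γ < 1) (R : S → ℝ)
    (V V' : S → ℝ) (hV : V = (1 - γ • Q)⁻¹ *ᵥ R) (hV' : V' = (1 - γ • Q')⁻¹ *ᵥ R)
    (h : ∀ s, V s ≤ (R + γ • (Q' *ᵥ V)) s) :
    ∀ s, V s ≤ V' s := by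
  have hR : (1 - γ • Q') *ᵥ V' = R := by
    rw [hV', Matrix.mulVec_mulVec,
      Matrix.mul_nonsing_inv _ (isUnit_one_sub Q' hQ' γ hγ0 hγ1), Matrix.one_mulVec]
  intro s
  have key := sub_fixed_nonpos Q' hQ' γ hγ0 hγ1 (V - V') (fun s => by
    have h1 := congrFun hR s
    have h2 := h s
    simp only [Matrix.sub_mulVec, Matrix.one_mulVec, Matrix.smul_mulVec, Pi.sub_apply,
      Pi.smul_apply, smul_eq_mul, Pi.add_apply, Matrix.mulVec_sub] at h1 h2 ⊢
    linarith) s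
  simp only [Pi.sub_apply] at key
  linarith
end

section
/- Proposition 2.4 (optimality condition): let S and A be nonempty finite types, P : A → Matrix S S ℝ with each P a row-stochastic, R : S → ℝ, and γ ∈ ℝ with 0 < γ < 1. For a deterministic policy π : S → A let P^π be the matrix with P^π(s,j) = (P (π s))(s,j) and V^π = (I − γ·P^π)⁻¹ *ᵥ R. Then π is optimal (V^π(s) ≥ V^{π'}(s) for every deterministic policy π' : S → A and every s ∈ S) if and only if for every action a ∈ A, every component of the vector (P^π − P a) *ᵥ ((I − γ·P^π)⁻¹ *ᵥ R) is nonnegative. -/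
open Matrix BigOperators

/-- The transition matrix `P^π` of a deterministic policy `π`:
`P^π(s, j) = (P (π s))(s, j)`. -/
def polMat {S A : Type*} (P : A → Matrix S S ℝ) (π : S → A) : Matrix S S ℝ :=
  Matrix.of fun s j => P (π s) s j

/-- The value vector `V^π = (I - γ • P^π)⁻¹ *ᵥ R` of a deterministic policy `π`. -/
noncomputable def polVal {S A : Type*} [Fintype S] [DecidableEq S]
    (P : A → Matrix S S ℝ) (γ : ℝ) (R : S → ℝ) (π : S → A) : S → ℝ :=
  (1 - γ • polMat P π)⁻¹ *ᵥ R

lemma maxPrinciple {S : Type*} [Fintype S] [Nonempty S] (Q : Matrix S S ℝ)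
    (hQ : RowStochastic Q) (γ : ℝ) (hγ0 : 0 < γ) (hγ1 : γ < 1) (x : S → ℝ)
    (hx : ∀ s, γ * (Q *ᵥ x) s ≤ x s) (s : S) : 0 ≤ x s := by
  obtain ⟨m, hm⟩ := Finite.exists_min x
  have h1 : x m ≤ (Q *ᵥ x) m := by
    calc x m = ∑ j, Q m j * x m := by rw [← Finset.sum_mul, hQ.2 m, one_mul]
      _ ≤ ∑ j, Q m j * x j :=
        Finset.sum_le_sum fun j _ => mul_le_mul_of_nonneg_left (hm j) (hQ.1 m j)
  have h2 := hx m
  have h3 : 0 ≤ x m := by nlinarith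
  exact h3.trans (hm s)

lemma bellman {S : Type*} [Fintype S] [DecidableEq S] [Nonempty S] (Q : Matrix S S ℝ)
    (hQ : RowStochastic Q) (γ : ℝ) (hγ0 : 0 < γ) (hγ1 : γ < 1) (R : S → ℝ) (s : S) :
    ((1 - γ • Q)⁻¹ *ᵥ R) s = R s + γ * (Q *ᵥ ((1 - γ • Q)⁻¹ *ᵥ R)) s := by
  have hu : IsUnit (1 - γ • Q) := by
    rw [← Matrix.mulVec_injective_iff_isUnit]
    intro x y hxy
    have key : ∀ s, x s - γ * (Q *ᵥ x) s = y s - γ * (Q *ᵥ y) s := by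
      intro s
      have := congrFun hxy s
      simpa [Matrix.sub_mulVec, Matrix.smul_mulVec] using this
    have h1 := maxPrinciple Q hQ γ hγ0 hγ1 (x - y) (by
      intro s
      have := key s
      simp only [Matrix.mulVec_sub, Pi.sub_apply]
      linarith)
    have h2 := maxPrinciple Q hQ γ hγ0 hγ1 (y - x) (by
      intro s
      have := key s
      simp only [Matrix.mulVec_sub, Pi.sub_apply]
      linarith)
    ext s
    have a := h1 s
    have b := h2 s
    simp only [Pi.sub_apply] at a b
    linarith
  have h : (1 - γ • Q) *ᵥ ((1 - γ • Q)⁻¹ *ᵥ R) = R := by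
    rw [Matrix.mulVec_mulVec, Matrix.mul_nonsing_inv _ ((Matrix.isUnit_iff_isUnit_det _).1 hu),
      Matrix.one_mulVec]
  have h' := congrFun h s
  rw [Matrix.sub_mulVec, Matrix.one_mulVec, Matrix.smul_mulVec] at h'
  simp only [Pi.sub_apply, Pi.smul_apply, smul_eq_mul] at h'
  linarith

lemma polMat_stoch {S A : Type*} [Fintype S] (P : A → Matrix S S ℝ)
    (hP : ∀ a, RowStochastic (P a)) (π : S → A) : RowStochastic (polMat P π) :=
  ⟨fun i j => (hP (π i)).1 i j, fun i => (hP (π i)).2 i⟩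

lemma polMat_mulVec {S A : Type*} [Fintype S] (P : A → Matrix S S ℝ) (π : S → A)
    (v : S → ℝ) (s : S) : (polMat P π *ᵥ v) s = (P (π s) *ᵥ v) s := rfl

/-- Proposition 2.4: a deterministic policy `π` is optimal if and only if
`(P^π - P^a) (I - γ P^π)⁻¹ R ≥ 0` for every action `a`. -/
theorem optimal_iff_nonneg_advantage {S A : Type*} [Fintype S] [DecidableEq S] [Nonempty S]
    [Fintype A] [Nonempty A] (P : A → Matrix S S ℝ) (hP : ∀ a, RowStochastic (P a))
    (R : S → ℝ) (γ : ℝ) (hγ0 : 0 < γ) (hγ1 : γ < 1) (π : S → A) :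
    (∀ π' : S → A, ∀ s : S, polVal P γ R π' s ≤ polVal P γ R π s) ↔
    (∀ a : A, ∀ s : S, 0 ≤ ((polMat P π - P a) *ᵥ ((1 - γ • polMat P π)⁻¹ *ᵥ R)) s) := by
  have hB : ∀ (ρ : S → A) (s : S),
      polVal P γ R ρ s = R s + γ * (polMat P ρ *ᵥ polVal P γ R ρ) s := fun ρ s =>
    bellman _ (polMat_stoch P hP ρ) γ hγ0 hγ1 R s
  change _ ↔ (∀ a : A, ∀ s : S, 0 ≤ ((polMat P π - P a) *ᵥ polVal P γ R π) s)
  simp only [Matrix.sub_mulVec, Pi.sub_apply, sub_nonneg]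
  constructor
  · intro hopt a s
    by_contra! hlt
    let ρ := Function.update π s a
    have hge : ∀ t, (polMat P π *ᵥ polVal P γ R π) t ≤ (polMat P ρ *ᵥ polVal P γ R π) t := by
      intro t
      by_cases hts : t = s
      · subst hts
        rw [polMat_mulVec P ρ]
        simpa [ρ] using hlt.le
      · rw [polMat_mulVec, polMat_mulVec]
        simp [ρ, hts]
    have hgt : (polMat P π *ᵥ polVal P γ R π) s < (polMat P ρ *ᵥ polVal P γ R π) s := by
      rw [polMat_mulVec P ρ]
      simpa [ρ] using hlt
    have hy := maxPrinciple _ (polMat_stoch P hP ρ) γ hγ0 hγ1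
      (polVal P γ R ρ - polVal P γ R π) (by
        intro t
        have h1 := hB ρ t
        have h2 := hB π t
        have h3 := mul_le_mul_of_nonneg_left (hge t) hγ0.le
        simp only [Matrix.mulVec_sub, Pi.sub_apply]
        linarith)
    have hz : 0 ≤ (polMat P ρ *ᵥ (polVal P γ R ρ - polVal P γ R π)) s :=
      Finset.sum_nonneg fun j _ => mul_nonneg ((polMat_stoch P hP ρ).1 s j) (hy j)
    have h0 := mul_nonneg hγ0.le hz
    simp only [Matrix.mulVec_sub, Pi.sub_apply] at h0
    have h1 := hB ρ s
    have h2 := hB π s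
    have h3 := mul_lt_mul_of_pos_left hgt hγ0
    have h4 := hopt ρ s
    linarith
  · intro hadv ρ s
    have hy := maxPrinciple _ (polMat_stoch P hP ρ) γ hγ0 hγ1
      (polVal P γ R π - polVal P γ R ρ) (by
        intro t
        have h1 := hB ρ t
        have h2 := hB π t
        have h3 := mul_le_mul_of_nonneg_left (hadv (ρ t) t) hγ0.le
        rw [← polMat_mulVec P ρ] at h3
        simp only [Matrix.mulVec_sub, Pi.sub_apply]
        linarith) s
    simpa using hy
end

section
/- Theorem 3.4 (optimality via the policy matrix): let S and A be nonempty finite types, P : A → Matrix S S ℝ with each P a row-stochastic, R : S → ℝ, and γ ∈ ℝ with 0 < γ < 1. Let π : S → A be a deterministic policy with policy matrix Π(s,a) = 1 if π(s) = a and 0 otherwise, and define the matrix Q : Matrix S S ℝ by Q(s,j) = Σ_{a ∈ A} Π(s,a) · (P a)(s,j). Then π is optimal (its value vector dominates that of every deterministic policy componentwise) if and only if for every action a ∈ A, every component of the vector (Q − P a) *ᵥ ((I − γ·Q)⁻¹ *ᵥ R) is nonnegative. -/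
open Matrix BigOperators

/-- The policy matrix of a deterministic policy `π : S → A`. -/
noncomputable def policyMatrix {S A : Type*} [DecidableEq A] (π : S → A) : Matrix S A ℝ :=
  Matrix.of fun s a => if π s = a then 1 else 0

theorem aux_nonneg {S : Type*} [Fintype S] [Nonempty S] (M : Matrix S S ℝ) (hM : RowStochastic M)
    (γ : ℝ) (hγ0 : 0 < γ) (hγ1 : γ < 1) (x : S → ℝ)
    (hx : ∀ s, 0 ≤ x s - γ * (M *ᵥ x) s) : ∀ s, 0 ≤ x s := by
  obtain ⟨m, hm⟩ := Finite.exists_min x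
  have h1 : x m ≤ (M *ᵥ x) m := by
    calc x m = ∑ j, M m j * x m := by rw [← Finset.sum_mul, hM.2 m, one_mul]
      _ ≤ ∑ j, M m j * x j :=
        Finset.sum_le_sum fun j _ => mul_le_mul_of_nonneg_left (hm j) (hM.1 m j)
      _ = (M *ᵥ x) m := rfl
  have h2 := hx m
  have h3 : 0 ≤ x m := by nlinarith [mul_le_mul_of_nonneg_left h1 hγ0.le]
  exact fun s => h3.trans (hm s)

theorem aux_val {S : Type*} [Fintype S] [DecidableEq S] [Nonempty S] (M : Matrix S S ℝ)
    (hM : RowStochastic M) (γ : ℝ) (hγ0 : 0 < γ) (hγ1 : γ < 1) (R : S → ℝ) (s : S) :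
    ((1 - γ • M)⁻¹ *ᵥ R) s = R s + γ * (M *ᵥ ((1 - γ • M)⁻¹ *ᵥ R)) s := by
  have hu : IsUnit (1 - γ • M) := by
    rw [← Matrix.mulVec_injective_iff_isUnit]
    intro x y hxy
    have e : ∀ s, x s - γ * (M *ᵥ x) s = y s - γ * (M *ᵥ y) s := by
      intro s
      have := congrFun hxy s
      simpa [Matrix.sub_mulVec, Matrix.smul_mulVec] using this
    have h1 := aux_nonneg M hM γ hγ0 hγ1 (x - y) (by
      intro s
      have := e s
      simp only [Matrix.mulVec_sub, Pi.sub_apply]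
      linarith)
    have h2 := aux_nonneg M hM γ hγ0 hγ1 (y - x) (by
      intro s
      have := e s
      simp only [Matrix.mulVec_sub, Pi.sub_apply]
      linarith)
    funext s
    have a := h1 s
    have b := h2 s
    simp only [Pi.sub_apply] at a b
    linarith
  have hd : IsUnit (1 - γ • M).det := (Matrix.isUnit_iff_isUnit_det _).1 hu
  have h : (1 - γ • M) *ᵥ ((1 - γ • M)⁻¹ *ᵥ R) = R := by
    rw [Matrix.mulVec_mulVec, Matrix.mul_nonsing_inv _ hd, Matrix.one_mulVec]
  have h' := congrFun h s
  rw [Matrix.sub_mulVec, Matrix.smul_mulVec, Matrix.one_mulVec] at h'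
  simp only [Pi.sub_apply, Pi.smul_apply, smul_eq_mul] at h'
  linarith

/-- Theorem 3.4: optimality via the policy matrix. -/
theorem optimal_iff_nonneg_advantage_policyMatrix {S A : Type*} [Fintype S] [DecidableEq S]
    [Nonempty S] [Fintype A] [DecidableEq A] [Nonempty A]
    (P : A → Matrix S S ℝ) (hP : ∀ a, RowStochastic (P a))
    (R : S → ℝ) (γ : ℝ) (hγ0 : 0 < γ) (hγ1 : γ < 1) (π : S → A)
    (Q : Matrix S S ℝ) (hQ : Q = Matrix.of fun s j => ∑ a, policyMatrix π s a * P a s j) :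
    (∀ π' : S → A, ∀ s : S, polVal P γ R π' s ≤ polVal P γ R π s) ↔
    (∀ a : A, ∀ s : S, 0 ≤ ((Q - P a) *ᵥ ((1 - γ • Q)⁻¹ *ᵥ R)) s) := by
  have hQ' : Q = polMat P π := by
    rw [hQ]
    ext s j
    simp [policyMatrix, polMat]
  subst hQ'
  clear hQ
  have hst : ∀ π' : S → A, RowStochastic (polMat P π') := fun π' =>
    ⟨fun i j => (hP (π' i)).1 i j, fun i => (hP (π' i)).2 i⟩
  have hval : ∀ π' s, polVal P γ R π' s = R s + γ * (polMat P π' *ᵥ polVal P γ R π') s :=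
    fun π' s => aux_val _ (hst π') γ hγ0 hγ1 R s
  have hrow : ∀ (π' : S → A) (v : S → ℝ) s, (polMat P π' *ᵥ v) s = (P (π' s) *ᵥ v) s :=
    fun _ _ _ => rfl
  change _ ↔ ∀ a s, 0 ≤ ((polMat P π - P a) *ᵥ polVal P γ R π) s
  simp only [Matrix.sub_mulVec, Pi.sub_apply]
  constructor
  · intro hopt a s
    by_contra hneg
    push Not at hneg
    have hs : ∀ t, 0 ≤ (polMat P (Function.update π s a) *ᵥ polVal P γ R π) t
        - (polMat P π *ᵥ polVal P γ R π) t := by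
      intro t
      by_cases ht : t = s
      · subst ht
        rw [hrow (Function.update π t a), Function.update_self]
        linarith
      · rw [hrow (Function.update π s a), Function.update_of_ne ht, hrow π, sub_self]
    have hge := aux_nonneg _ (hst (Function.update π s a)) γ hγ0 hγ1
      (polVal P γ R (Function.update π s a) - polVal P γ R π) (by
        intro t
        have h1 := hval (Function.update π s a) t
        have h2 := hval π t
        have h3 := mul_nonneg hγ0.le (hs t)
        simp only [Matrix.mulVec_sub, Pi.sub_apply]
        linarith)
    have heq : polVal P γ R (Function.update π s a) = polVal P γ R π := by
      funext t
      have h1 := hge t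
      have h2 := hopt (Function.update π s a) t
      simp only [Pi.sub_apply] at h1
      linarith
    have h1 := hval (Function.update π s a) s
    rw [heq, hrow, Function.update_self] at h1
    have h2 := hval π s
    have h3 := mul_neg_of_pos_of_neg hγ0 hneg
    linarith
  · intro hadv π' 
    have hge := aux_nonneg _ (hst π') γ hγ0 hγ1 (polVal P γ R π - polVal P γ R π') (by
      intro t
      have h1 := hval π' t
      have h2 := hval π t
      have h3 := mul_nonneg hγ0.le (hadv (π' t) t)
      rw [← hrow π'] at h3
      simp only [Matrix.mulVec_sub, Pi.sub_apply]
      linarith)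
    intro s
    have h1 := hge s
    simp only [Pi.sub_apply] at h1
    linarith
end

section
/- Value as discounted accumulated reward: let S be a nonempty finite type, P : Matrix S S ℝ a row-stochastic matrix, γ ∈ ℝ with 0 ≤ γ < 1, and R : S → ℝ. Then the value vector V = (I − γ·P)⁻¹ *ᵥ R equals the convergent series V = Σ'_{k=0}^{∞} γ^k · (P^k *ᵥ R), where convergence is componentwise and P^0 = I. -/
open Matrix BigOperators

/-- The value vector `(I - γ•P)⁻¹ *ᵥ R` equals the componentwise-convergent series
`∑ₖ γ^k • (P^k *ᵥ R)`. -/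
theorem value_eq_discounted_series {S : Type*} [Fintype S] [DecidableEq S] [Nonempty S]
    (P : Matrix S S ℝ) (hP : RowStochastic P) (γ : ℝ) (hγ0 : 0 ≤ γ) (hγ1 : γ < 1)
    (R : S → ℝ) :
    ∀ s : S, HasSum (fun k : ℕ => γ ^ k * ((P ^ k) *ᵥ R) s) (((1 - γ • P)⁻¹ *ᵥ R) s) := by
  intro s
  let : NormedRing (Matrix S S ℝ) := Matrix.linftyOpNormedRing
  let : NormedAlgebra ℝ (Matrix S S ℝ) := Matrix.linftyOpNormedAlgebra
  have hn : ‖γ • P‖ < 1 := by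
    refine lt_of_le_of_lt ?_ hγ1
    rw [norm_smul, Real.norm_of_nonneg hγ0]
    have h1 : ‖P‖ ≤ 1 := by
      rw [Matrix.linfty_opNorm_def]
      have : (Finset.univ.sup fun i : S => ∑ j : S, ‖P i j‖₊) ≤ 1 := by
        refine Finset.sup_le fun i _ => ?_
        rw [← NNReal.coe_le_coe]
        push_cast
        rw [← hP.2 i]
        exact Finset.sum_le_sum fun j _ => (Real.norm_of_nonneg (hP.1 i j)).le
      exact_mod_cast this
    nlinarith
  have hs : Summable (fun k : ℕ => (γ • P) ^ k) := summable_geometric_of_norm_lt_one hn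
  have hinv : (1 - γ • P)⁻¹ = ∑' k : ℕ, (γ • P) ^ k :=
    Matrix.inv_eq_right_inv (mul_neg_geom_series (γ • P) hn)
  have hsum : HasSum (fun k : ℕ => (γ • P) ^ k) ((1 - γ • P)⁻¹) := hinv ▸ hs.hasSum
  let L : Matrix S S ℝ →ₗ[ℝ] ℝ :=
    { toFun := fun M => (M *ᵥ R) s
      map_add' := fun A B => by simp [Matrix.add_mulVec]
      map_smul' := fun c A => by simp [Matrix.smul_mulVec] }
  have hL := hsum.map L L.continuous_of_finiteDimensional
  convert hL using 1
  · funext k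
    simp [L, smul_pow, Matrix.smul_mulVec]
  · rfl
end
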